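/- Let n ≥ 1, let x_k = −cos(kπ/n) be the Chebyshev points of the second kind, let θ ∈ ℝ^{n+1}, and define the binned rounded nodes x̃_k as follows: if x_k < −1/2 then x̃_k := −1 + (x_k + 1)(1 + θ_k); if |x_k| ≤ 1/2 then x̃_k := x_k·(1 + θ_k); if x_k > 1/2 then x̃_k := 1 + (x_k − 1)(1 + θ_k). Then for every k ∈ {0, …, n}, Σ_{j≠k} |r_{jk}(x, x̃)| ≤ ‖θ‖_∞·(3.2 + 2.3·n + 4.3·n·log(n + 1)), where ‖θ‖_∞ = max_k |θ_k| and log is the natural logarithm. -/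

import Mathlib

/-!
Let `d t = min |t| (1 - |t|)` and `M = ‖θ‖_∞`. In each of the three bins `|x̃_k - x_k| ≤ M * d (x_k)`,
and `d` is 1-Lipschitz, so `|r_{jk}| ≤ M * (d (x_k) + d (x_j)) / |x_k - x_j|` is at most
`M * (1 + 2 * d (x_k) / |x_k - x_j|)`.

Write `x_k = -cos a`, `x_j = -cos b`. The sum-to-product formula, concavity of `sin` on `[0, π]` and
Jordan's inequality give `|x_k - x_j| ≥ sin a * |k - j| / n` (`sin_mul_le_abs_cos_sub_cos`), while
`d (cos a) ≤ (3/5) * sin a` (`distBin_le_sin`). Hence each term is at most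
`M * (1 + (6/5) * n / |k - j|)` and the sum over `j` reduces to two harmonic sums
(`sum_inv_abs_sub`), each at most `1 + log (n + 1)`.
-/

/-- Relative error in the node differences `r_{jk}(x, x̃)`. -/
noncomputable def rjk {n : ℕ} (x xt : Fin (n + 1) → ℝ) (j k : Fin (n + 1)) : ℝ :=
  (xt k - xt j) / (x k - x j) - 1

/-- The distance from `t ∈ [-1, 1]` to the nearest of the bin centres `-1`, `0`, `1`. -/
noncomputable def distBin (t : ℝ) : ℝ := min |t| (1 - |t|)

lemma distBin_lipschitz (s t : ℝ) : distBin t ≤ distBin s + |s - t| := by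
  unfold distBin
  have h1 : |t| ≤ |s| + |s - t| := by
    have := abs_sub_abs_le_abs_sub t s
    rw [abs_sub_comm] at this; linarith
  have h2 : |s| ≤ |t| + |s - t| := by
    have := abs_sub_abs_le_abs_sub s t
    linarith
  rw [← min_add_add_right]
  exact min_le_min h1 (by linarith)

/-- The optimal constant is `1 / √3`, attained at `|cos a| = 1 / 2`. -/
lemma distBin_le_sin {a : ℝ} (h0 : 0 ≤ a) (hpi : a ≤ Real.pi) :
    distBin (-Real.cos a) ≤ 3 / 5 * Real.sin a := by
  have hs := Real.sin_nonneg_of_nonneg_of_le_pi h0 hpi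
  have hsq := Real.sin_sq_add_cos_sq a
  unfold distBin
  rw [abs_neg]
  have hc := abs_nonneg (Real.cos a)
  have hc1 := Real.abs_cos_le_one a
  have hcs := sq_abs (Real.cos a)
  rw [← hcs] at hsq
  generalize |Real.cos a| = c at *
  apply le_of_sq_le_sq _ (by positivity)
  rcases le_total c (1 / 2) with h | h
  · rw [min_eq_left (by linarith)]
    nlinarith
  · rw [min_eq_right (by linarith)]
    nlinarith

lemma sin_mul_le_abs_cos_sub_cos {a b : ℝ} (ha : 0 ≤ a) (ha' : a ≤ Real.pi)
    (hb : 0 ≤ b) (hb' : b ≤ Real.pi) :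
    Real.sin a * (|a - b| / Real.pi) ≤ |Real.cos a - Real.cos b| := by
  have hpi := Real.pi_pos
  rw [Real.cos_sub_cos, abs_mul, abs_mul, abs_neg, abs_two]
  have hsa := Real.sin_nonneg_of_nonneg_of_le_pi ha ha'
  have hsb := Real.sin_nonneg_of_nonneg_of_le_pi hb hb'
  have h1 : Real.sin a / 2 ≤ |Real.sin ((a + b) / 2)| := by
    have := strictConcaveOn_sin_Icc.concaveOn.2 ⟨ha, ha'⟩ ⟨hb, hb'⟩
      (by norm_num : (0 : ℝ) ≤ 1 / 2) (by norm_num : (0 : ℝ) ≤ 1 / 2) (by norm_num)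
    simp only [smul_eq_mul] at this
    rw [show (a + b) / 2 = 1 / 2 * a + 1 / 2 * b by ring]
    exact le_trans (by linarith) (le_abs_self _)
  have h2 : |a - b| / Real.pi ≤ |Real.sin ((a - b) / 2)| := by
    have hab : |(a - b) / 2| ≤ Real.pi / 2 := by
      rw [abs_le]; constructor <;> linarith
    have := Real.mul_abs_le_abs_sin hab
    rw [abs_div, abs_two] at this
    calc _ = 2 / Real.pi * (|a - b| / 2) := by ring
      _ ≤ _ := this
  calc Real.sin a * (|a - b| / Real.pi) = 2 * (Real.sin a / 2) * (|a - b| / Real.pi) := by ring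
    _ ≤ _ := by gcongr

/-- The term `j = a` contributes `0⁻¹ = 0`. -/
lemma sum_inv_abs_sub (a b : ℕ) :
    ∑ j ∈ Finset.range (a + b + 1), |(a : ℝ) - j|⁻¹ = (harmonic a : ℝ) + (harmonic b : ℝ) := by
  induction b with
  | zero =>
    induction a with
    | zero => simp
    | succ m ih =>
      rw [Finset.sum_range_succ', harmonic_succ]
      simp only [add_zero, harmonic_zero, Rat.cast_zero] at ih ⊢
      push_cast
      rw [← ih, sub_zero, abs_of_pos (by positivity : (0 : ℝ) < (m : ℝ) + 1)]
      congr 1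
      refine Finset.sum_congr rfl fun j _ => ?_
      congr 2
      ring
  | succ m ih =>
    rw [← add_assoc, Finset.sum_range_succ, ih, harmonic_succ]
    push_cast
    rw [show (a : ℝ) - (a + m + 1) = -(m + 1) by ring, abs_neg,
      abs_of_pos (by positivity : (0 : ℝ) < (m : ℝ) + 1)]
    ring

lemma harmonic_le_of_le {m n : ℕ} (h : m ≤ n) :
    (harmonic m : ℝ) ≤ 1 + Real.log (n + 1) := by
  rcases Nat.eq_zero_or_pos m with rfl | hm
  · have : 0 ≤ Real.log ((n : ℝ) + 1) := Real.log_nonneg (by linarith [n.cast_nonneg (α := ℝ)])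
    simp only [harmonic_zero, Rat.cast_zero]
    linarith
  · refine (harmonic_le_one_add_log m).trans ?_
    have hm' : (0 : ℝ) < m := by exact_mod_cast hm
    have hmn : (m : ℝ) ≤ n := by exact_mod_cast h
    gcongr
    linarith

lemma abs_round_sub_le {t τ y M : ℝ} (ht : |t| ≤ 1) (hτ : |τ| ≤ M)
    (hy : y = if t < -(1 / 2) then -1 + (t + 1) * (1 + τ)
      else if |t| ≤ 1 / 2 then t * (1 + τ) else 1 + (t - 1) * (1 + τ)) :
    |y - t| ≤ M * distBin t := by
  have key : |y - t| = |τ| * distBin t := by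
    unfold distBin
    rw [abs_le] at ht
    split_ifs at hy with h1 h2
    · rw [abs_of_neg (by linarith : t < 0), min_eq_right (by linarith), hy,
        show -1 + (t + 1) * (1 + τ) - t = τ * (1 - -t) by ring, abs_mul,
        abs_of_nonneg (by linarith : 0 ≤ 1 - -t)]
    · rw [min_eq_left (by linarith), hy, show t * (1 + τ) - t = τ * t by ring, abs_mul]
    · have h3 : 1 / 2 < t := by
        by_contra h
        exact h2 (abs_le.2 ⟨by linarith, by linarith⟩)
      rw [abs_of_pos (by linarith : 0 < t), min_eq_right (by linarith), hy,
        show 1 + (t - 1) * (1 + τ) - t = -(τ * (1 - t)) by ring, abs_neg, abs_mul,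
        abs_of_nonneg (by linarith : 0 ≤ 1 - t)]
  rw [key]
  have : 0 ≤ distBin t := le_min (abs_nonneg t) (by linarith)
  gcongr

theorem stmt_11 {n : ℕ} (hn : 1 ≤ n) (θ x xt : Fin (n + 1) → ℝ)
    (hx : ∀ k : Fin (n + 1), x k = -Real.cos ((k : ℕ) * Real.pi / n))
    (hxt : ∀ k : Fin (n + 1), xt k =
      if x k < -(1 / 2) then -1 + (x k + 1) * (1 + θ k)
      else if |x k| ≤ 1 / 2 then x k * (1 + θ k)
      else 1 + (x k - 1) * (1 + θ k))
    (k : Fin (n + 1)) :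
    ∑ j ∈ Finset.univ.erase k, |rjk x xt j k| ≤
      (Finset.univ.sup' Finset.univ_nonempty fun i => |θ i|) *
        (3.2 + 2.3 * n + 4.3 * n * Real.log (n + 1)) := by
  set M := Finset.univ.sup' Finset.univ_nonempty fun i => |θ i| with hM
  have hθ : ∀ i, |θ i| ≤ M := fun i => Finset.le_sup' (fun i => |θ i|) (Finset.mem_univ i)
  have hM0 : 0 ≤ M := (abs_nonneg _).trans (hθ k)
  have hn1 : (1 : ℝ) ≤ n := by exact_mod_cast hn
  have hn0 : (0 : ℝ) < n := by linarith
  have hpi := Real.pi_pos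
  have hang0 : ∀ i : Fin (n + 1), 0 ≤ ((i : ℕ) : ℝ) * Real.pi / n := fun i => by positivity
  have hang1 : ∀ i : Fin (n + 1), ((i : ℕ) : ℝ) * Real.pi / n ≤ Real.pi := fun i => by
    have : ((i : ℕ) : ℝ) ≤ n := by exact_mod_cast Nat.lt_succ_iff.1 i.2
    rw [div_le_iff₀ hn0]
    nlinarith
  have hround : ∀ i, |xt i - x i| ≤ M * distBin (x i) := fun i =>
    abs_round_sub_le (by rw [hx, abs_neg]; exact Real.abs_cos_le_one _) (hθ i) (hxt i)
  have hterm : ∀ j ∈ Finset.univ.erase k,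
      |rjk x xt j k| ≤ M * (1 + 6 / 5 * n * |((k : ℕ) : ℝ) - (j : ℕ)|⁻¹) := by
    intro j hj
    have hjk : (k : ℕ) ≠ j := fun h => (Finset.mem_erase.1 hj).1 (Fin.ext h.symm)
    have hjk' : ((k : ℕ) : ℝ) - (j : ℕ) ≠ 0 := sub_ne_zero.2 (by exact_mod_cast hjk)
    have hx0 : x k - x j ≠ 0 := by
      intro h
      rw [hx, hx] at h
      have := Real.injOn_cos ⟨hang0 k, hang1 k⟩ ⟨hang0 j, hang1 j⟩ (by linarith)
      field_simp at this
      exact hjk (by exact_mod_cast this)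
    have hpos := abs_pos.2 hx0
    have hpos' := abs_pos.2 hjk'
    have hgap : Real.sin ((k : ℕ) * Real.pi / n) * (|((k : ℕ) : ℝ) - (j : ℕ)| / n)
        ≤ |x k - x j| := by
      have := sin_mul_le_abs_cos_sub_cos (hang0 k) (hang1 k) (hang0 j) (hang1 j)
      rw [show ((k : ℕ) : ℝ) * Real.pi / n - (j : ℕ) * Real.pi / n
          = (((k : ℕ) : ℝ) - (j : ℕ)) * (Real.pi / n) by ring, abs_mul,
        abs_of_pos (by positivity : 0 < Real.pi / n),
        show |((k : ℕ) : ℝ) - (j : ℕ)| * (Real.pi / n) / Real.pi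
          = |((k : ℕ) : ℝ) - (j : ℕ)| / n by field_simp] at this
      rw [hx, hx, show ∀ u v : ℝ, -u - -v = -(u - v) by intros; ring, abs_neg]
      exact this
    have hd : distBin (x k) ≤ 3 / 5 * n * |((k : ℕ) : ℝ) - (j : ℕ)|⁻¹ * |x k - x j| := by
      have h1 := distBin_le_sin (hang0 k) (hang1 k)
      rw [← hx k] at h1
      refine h1.trans ?_
      calc _ = 3 / 5 * n * |((k : ℕ) : ℝ) - (j : ℕ)|⁻¹ *
            (Real.sin ((k : ℕ) * Real.pi / n) * (|((k : ℕ) : ℝ) - (j : ℕ)| / n)) := by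
              field_simp
        _ ≤ _ := by gcongr
    have hr : rjk x xt j k = ((xt k - x k) - (xt j - x j)) / (x k - x j) := by
      unfold rjk
      field_simp
      ring
    rw [hr, abs_div, div_le_iff₀ hpos]
    calc |xt k - x k - (xt j - x j)| ≤ |xt k - x k| + |xt j - x j| := abs_sub _ _
      _ ≤ M * distBin (x k) + M * (distBin (x k) + |x k - x j|) := by
          refine add_le_add (hround k) ((hround j).trans ?_)
          gcongr
          exact distBin_lipschitz _ _
      _ = M * (2 * distBin (x k) + |x k - x j|) := by ring
      _ ≤ M * (2 * (3 / 5 * n * |((k : ℕ) : ℝ) - (j : ℕ)|⁻¹ * |x k - x j|) + |x k - x j|) := by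
          gcongr
      _ = _ := by ring
  have hkn : (k : ℕ) ≤ n := Nat.lt_succ_iff.1 k.2
  have hsum : ∑ j ∈ Finset.univ.erase k, |((k : ℕ) : ℝ) - (j : ℕ)|⁻¹
      ≤ 2 * (1 + Real.log (n + 1)) := by
    rw [Finset.sum_erase _ (by simp),
      Fin.sum_univ_eq_sum_range (fun j => |((k : ℕ) : ℝ) - (j : ℕ)|⁻¹) (n + 1)]
    have := sum_inv_abs_sub k (n - k)
    rw [Nat.add_sub_cancel' hkn] at this
    rw [this]
    linarith [harmonic_le_of_le hkn, harmonic_le_of_le (Nat.sub_le n k)]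
  have hlog : 0.69 ≤ Real.log ((n : ℝ) + 1) := by
    have h2 : Real.log 2 ≤ Real.log ((n : ℝ) + 1) :=
      Real.log_le_log (by norm_num) (by linarith)
    linarith [Real.log_two_gt_d9]
  calc _ ≤ ∑ j ∈ Finset.univ.erase k, M * (1 + 6 / 5 * n * |((k : ℕ) : ℝ) - (j : ℕ)|⁻¹) :=
        Finset.sum_le_sum hterm
    _ = M * (n + 6 / 5 * n * ∑ j ∈ Finset.univ.erase k, |((k : ℕ) : ℝ) - (j : ℕ)|⁻¹) := by
        rw [← Finset.mul_sum, Finset.sum_add_distrib, ← Finset.mul_sum]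
        simp [Finset.card_erase_of_mem]
    _ ≤ M * (n + 6 / 5 * n * (2 * (1 + Real.log (n + 1)))) := by gcongr
    _ ≤ _ := by
        refine mul_le_mul_of_nonneg_left ?_ hM0
        nlinarith
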